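/- Let X be a real Banach space, let A ⊆ X be a nonempty compact set, let f : X → X satisfy f(A) = A, and let P : X → X be a continuous linear map with P ∘ P = P whose range is a finite-dimensional subspace of dimension m ≥ 1. Suppose there exist constants L ≥ 0, δ ≥ 0 such that for all u, v ∈ A, ‖P(f(u) − f(v))‖ ≤ L‖u − v‖ and ‖(f(u) − f(v)) − P(f(u) − f(v))‖ ≤ δ‖u − v‖. If α > 0 and d > 0 satisfy m·(2 + 4/α)^m · (αL + 2δ)^d < 1, then the d-dimensional Hausdorff measure of A is zero; in particular the Hausdorff dimension of A is at most d. -/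

import Mathlib

open MeasureTheory

open scoped Function ENNReal in
theorem aux_card {E : Type*} [NormedAddCommGroup E] [NormedSpace ℝ E] [FiniteDimensional ℝ E]
    (β : ℝ) (hβ : 0 < β) (s : Finset E) (hs : ∀ c ∈ s, ‖c‖ ≤ 1)
    (h : ∀ c ∈ s, ∀ d ∈ s, c ≠ d → β ≤ ‖c - d‖) :
    (s.card : ℝ) ≤ (1 + 2 / β) ^ Module.finrank ℝ E := by
  borelize E
  let μ : Measure E := Measure.addHaar
  let δ : ℝ := β / 2
  let ρ : ℝ := 1 + β / 2
  have δpos : 0 < δ := by positivity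
  have ρpos : 0 < ρ := by positivity
  set A := ⋃ c ∈ s, Metric.ball (c : E) δ with hA
  have D : Set.Pairwise (s : Set E) (Disjoint on fun c => Metric.ball (c : E) δ) := by
    rintro c hc d hd hcd
    apply Metric.ball_disjoint_ball
    rw [dist_eq_norm]
    have := h c hc d hd hcd
    simp only [δ]; linarith
  have A_subset : A ⊆ Metric.ball (0 : E) ρ := by
    refine Set.iUnion₂_subset fun x hx => ?_
    apply Metric.ball_subset_ball'
    have := hs x hx
    rw [dist_zero_right]; simp only [δ, ρ]; linarith
  have I :
    (s.card : ℝ≥0∞) * ENNReal.ofReal (δ ^ Module.finrank ℝ E) * μ (Metric.ball 0 1) ≤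
      ENNReal.ofReal (ρ ^ Module.finrank ℝ E) * μ (Metric.ball 0 1) :=
    calc
      (s.card : ℝ≥0∞) * ENNReal.ofReal (δ ^ Module.finrank ℝ E) * μ (Metric.ball 0 1) = μ A := by
        rw [hA, measure_biUnion_finset D fun c _ => measurableSet_ball]
        simp only [μ.addHaar_ball_of_pos _ δpos]
        simp only [Finset.sum_const, nsmul_eq_mul, mul_assoc]
      _ ≤ μ (Metric.ball (0 : E) ρ) := measure_mono A_subset
      _ = ENNReal.ofReal (ρ ^ Module.finrank ℝ E) * μ (Metric.ball 0 1) := by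
        simp only [μ.addHaar_ball_of_pos _ ρpos]
  have J : (s.card : ℝ≥0∞) * ENNReal.ofReal (δ ^ Module.finrank ℝ E)
      ≤ ENNReal.ofReal (ρ ^ Module.finrank ℝ E) :=
    (ENNReal.mul_le_mul_iff_left (Metric.measure_ball_pos _ _ zero_lt_one).ne'
      measure_ball_lt_top.ne).1 I
  have K := ENNReal.toReal_le_of_le_ofReal (pow_nonneg ρpos.le _) J
  rw [ENNReal.toReal_mul, ENNReal.toReal_natCast, ENNReal.toReal_ofReal (by positivity)] at K
  have e : 1 + 2 / β = ρ / δ := by simp only [ρ, δ]; field_simp; ring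
  rw [e, div_pow, le_div_iff₀ (by positivity)]
  exact K

theorem aux_net {E : Type*} [NormedAddCommGroup E] [NormedSpace ℝ E] [FiniteDimensional ℝ E]
    (β : ℝ) (hβ : 0 < β) : ∃ s : Finset E, (s.card : ℝ) ≤ (1 + 2 / β) ^ Module.finrank ℝ E ∧
      ∀ y : E, ‖y‖ ≤ 1 → ∃ c ∈ s, ‖y - c‖ ≤ β := by
  classical
  let Q : Finset E → Prop := fun s => (∀ c ∈ s, ‖c‖ ≤ 1) ∧
    ∀ c ∈ s, ∀ d ∈ s, c ≠ d → β ≤ ‖c - d‖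
  let T : Set ℕ := {n | ∃ s, Q s ∧ s.card = n}
  have hne : T.Nonempty := ⟨0, ∅, by simp [Q], rfl⟩
  have hb : BddAbove T := by
    refine ⟨⌊(1 + 2 / β) ^ Module.finrank ℝ E⌋₊, ?_⟩
    rintro n ⟨s, hs, rfl⟩
    exact Nat.le_floor (aux_card β hβ s hs.1 hs.2)
  obtain ⟨s, hs, hcard⟩ := Nat.sSup_mem hne hb
  refine ⟨s, aux_card β hβ s hs.1 hs.2, fun y hy => ?_⟩
  by_contra! hcon
  have hys : y ∉ s := fun hys => by
    have := hcon y hys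
    simp at this; linarith
  have hQ : Q (insert y s) := by
    refine ⟨?_, ?_⟩
    · intro c hc
      rcases Finset.mem_insert.1 hc with rfl | hc
      · exact hy
      · exact hs.1 c hc
    · intro c hc d hd hcd
      rcases Finset.mem_insert.1 hc with h1 | h1 <;> rcases Finset.mem_insert.1 hd with h2 | h2
      · exact absurd (h1.trans h2.symm) hcd
      · rw [h1]; exact (hcon d h2).le
      · rw [h2, norm_sub_rev]; exact (hcon c h1).le
      · exact hs.2 c h1 d h2 hcd
  have h1 : (insert y s).card ≤ sSup T := le_csSup hb ⟨_, hQ, rfl⟩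
  rw [Finset.card_insert_of_notMem hys] at h1
  omega

theorem aux_iter {X : Type*} [NormedAddCommGroup X] [NormedSpace ℝ X]
    (A : Set X) (hAc : IsCompact A)
    (f : X → X) (hfA : f '' A = A)
    (P : X →L[ℝ] X)
    [FiniteDimensional ℝ (LinearMap.range (P : X →ₗ[ℝ] X))]
    (L δ : ℝ) (hL : 0 ≤ L)
    (hPf : ∀ u ∈ A, ∀ v ∈ A, ‖P (f u - f v)‖ ≤ L * ‖u - v‖)
    (hQf : ∀ u ∈ A, ∀ v ∈ A, ‖(f u - f v) - P (f u - f v)‖ ≤ δ * ‖u - v‖)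
    (α : ℝ) (hα : 0 < α) (hδ : 0 ≤ δ) (k : ℕ) :
    ∃ t : Finset (Set X),
      (t.card : ℝ) ≤ ((1 + 4 / α) ^ Module.finrank ℝ (LinearMap.range (P : X →ₗ[ℝ] X))) ^ k ∧
      A ⊆ ⋃ s : t, (s : Set X) ∧
      ∀ s ∈ t, s ⊆ A ∧ ∀ x ∈ s, ∀ y ∈ s, dist x y ≤ (α * L + δ) ^ k * Metric.diam A := by
  classical
  induction k with
  | zero =>
    refine ⟨{A}, by simp, fun x hx => by simpa using hx, ?_⟩
    intro s hs
    rw [Finset.mem_singleton] at hs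
    subst hs
    refine ⟨subset_rfl, fun x hx y hy => ?_⟩
    simpa using Metric.dist_le_diam_of_mem hAc.isBounded hx hy
  | succ k ih =>
    obtain ⟨t, htc, htA, ht⟩ := ih
    obtain ⟨c, hcc, hc⟩ := aux_net (E := LinearMap.range (P : X →ₗ[ℝ] X)) (α / 2) (by positivity)
    have e4 : 2 / (α / 2) = 4 / α := by field_simp; norm_num
    rw [e4] at hcc
    have hbase : ∀ S : Set X, ∃ b : X, S.Nonempty → b ∈ S := fun S => by
      by_cases h : S.Nonempty
      · exact ⟨h.some, fun _ => h.some_mem⟩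
      · exact ⟨0, fun h' => absurd h' h⟩
    choose b hb using hbase
    set r := (α * L + δ) ^ k * Metric.diam A with hr
    have hr0 : 0 ≤ r := by have := Metric.diam_nonneg (s := A); positivity
    let g : Set X × LinearMap.range (P : X →ₗ[ℝ] X) → Set X := fun p =>
      {x | ∃ u ∈ p.1, x = f u ∧ ‖P (f u - f (b p.1)) - (L * r) • (p.2 : X)‖ ≤ (L * r) * (α / 2)}
    refine ⟨(t ×ˢ c).image g, ?_, ?_, ?_⟩
    · calc (((t ×ˢ c).image g).card : ℝ) ≤ ((t ×ˢ c).card : ℝ) := by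
            exact_mod_cast Finset.card_image_le
        _ = t.card * c.card := by rw [Finset.card_product]; push_cast; rfl
        _ ≤ _ := by rw [pow_succ]; gcongr
    · intro x hx
      rw [← hfA] at hx
      obtain ⟨u, hu, rfl⟩ := hx
      obtain ⟨⟨S, hS⟩, huS⟩ := Set.mem_iUnion.1 (htA hu)
      simp only at huS
      have hbS := hb S ⟨u, huS⟩
      have hP := hPf u hu (b S) ((ht S hS).1 hbS)
      have hd := (ht S hS).2 u huS _ hbS
      rw [dist_eq_norm] at hd
      have hP' : ‖P (f u - f (b S))‖ ≤ L * r := hP.trans (by gcongr)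
      let z : LinearMap.range (P : X →ₗ[ℝ] X) := ⟨P (f u - f (b S)), ⟨_, rfl⟩⟩
      have hLr : 0 ≤ L * r := by positivity
      have hz : ‖z‖ ≤ L * r := hP'
      have key : ∃ y ∈ c, ‖z - (L * r) • y‖ ≤ (L * r) * (α / 2) := by
        obtain ⟨y, hy, hyn⟩ := hc ((L * r)⁻¹ • z) (by
          rw [norm_smul, norm_inv, Real.norm_of_nonneg hLr]
          exact inv_mul_le_one_of_le₀ hz hLr)
        refine ⟨y, hy, ?_⟩
        have : z - (L * r) • y = (L * r) • ((L * r)⁻¹ • z - y) := by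
          rw [smul_sub]
          congr 1
          rcases hLr.eq_or_lt with h0 | h0
          · rw [← h0] at hz ⊢
            simpa using hz
          · rw [smul_inv_smul₀ h0.ne']
        rw [this, norm_smul, Real.norm_of_nonneg hLr]
        gcongr
      obtain ⟨y, hy, hyn⟩ := key
      refine Set.mem_iUnion.2 ⟨⟨g (S, y), Finset.mem_image_of_mem _ (Finset.mk_mem_product hS hy)⟩, ?_⟩
      exact ⟨u, huS, rfl, hyn⟩
    · intro s hs
      obtain ⟨⟨S, y⟩, hp, rfl⟩ := Finset.mem_image.1 hs
      obtain ⟨hS, hy⟩ := Finset.mem_product.1 hp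
      simp only at hS hy
      refine ⟨?_, ?_⟩
      · rintro _ ⟨u, hu, rfl, -⟩
        rw [← hfA]
        exact ⟨u, (ht S hS).1 hu, rfl⟩
      · rintro _ ⟨u, hu, rfl, h1⟩ _ ⟨v, hv, rfl, h2⟩
        simp only at hu hv h1 h2
        have hd := (ht S hS).2 u hu v hv
        have hq := hQf u ((ht S hS).1 hu) v ((ht S hS).1 hv)
        rw [dist_eq_norm] at hd
        have hq' : ‖(f u - f v) - P (f u - f v)‖ ≤ δ * r := hq.trans (by gcongr)
        have hp' : ‖P (f u - f v)‖ ≤ α * L * r := by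
          have e : P (f u - f v) = (P (f u - f (b S)) - (L * r) • (y : X))
              - (P (f v - f (b S)) - (L * r) • (y : X)) := by
            simp only [map_sub]; abel
          rw [e]
          refine (norm_sub_le _ _).trans ?_
          linarith
        rw [dist_eq_norm, pow_succ', mul_assoc, ← hr]
        have e : f u - f v = P (f u - f v) + ((f u - f v) - P (f u - f v)) := by abel
        rw [e]
        refine (norm_add_le _ _).trans ?_
        linarith

/-- If a compact invariant set `A = f(A)` admits a finite-rank projection `P` of rank
`m ≥ 1` with the squeezing estimates `‖P(f u − f v)‖ ≤ L‖u−v‖`,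
`‖(I−P)(f u − f v)‖ ≤ δ‖u−v‖` on `A`, and `α > 0`, `d > 0` satisfy
`m(2+4/α)^m (αL+2δ)^d < 1`, then the `d`-dimensional Hausdorff measure of `A` is zero;
in particular `dim_H A ≤ d`. -/
theorem stmt_8 {X : Type*} [NormedAddCommGroup X] [NormedSpace ℝ X] [CompleteSpace X]
    [MeasurableSpace X] [BorelSpace X]
    (A : Set X) (hA : A.Nonempty) (hAc : IsCompact A)
    (f : X → X) (hfA : f '' A = A)
    (P : X →L[ℝ] X) (hproj : ∀ z : X, P (P z) = P z) (m : ℕ)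
    (hrank : Module.finrank ℝ (LinearMap.range (P : X →ₗ[ℝ] X)) = m) (hm : 1 ≤ m)
    (L δ : ℝ) (hL : 0 ≤ L) (hδ : 0 ≤ δ)
    (hPf : ∀ u ∈ A, ∀ v ∈ A, ‖P (f u - f v)‖ ≤ L * ‖u - v‖)
    (hQf : ∀ u ∈ A, ∀ v ∈ A, ‖(f u - f v) - P (f u - f v)‖ ≤ δ * ‖u - v‖)
    (α d : ℝ) (hα : 0 < α) (hd : 0 < d)
    (hcond : (m : ℝ) * (2 + 4 / α) ^ m * (α * L + 2 * δ) ^ d < 1) :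
    μH[d] A = 0 ∧ dimH A ≤ ENNReal.ofReal d := by
  have hmain : μH[d] A = 0 := by
    haveI : FiniteDimensional ℝ (LinearMap.range (P : X →ₗ[ℝ] X)) :=
      Module.finite_of_finrank_pos (by omega)
    have hit := aux_iter A hAc f hfA P L δ hL hPf hQf α hα hδ
    rw [hrank] at hit
    set N : ℝ := (1 + 4 / α) ^ m with hN
    set q : ℝ := α * L + δ with hq
    have hq0 : 0 ≤ q := by positivity
    have hN1 : 1 ≤ N := one_le_pow₀ (by have : 0 < 4 / α := by positivity
                                        linarith)
    have hNq : N * q ^ d < 1 := by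
      refine lt_of_le_of_lt ?_ hcond
      have h1 : (1 : ℝ) ≤ m := by exact_mod_cast hm
      have h2 : N ≤ m * (2 + 4 / α) ^ m := by
        calc N ≤ (2 + 4 / α) ^ m := by rw [hN]; gcongr; norm_num
          _ ≤ _ := le_mul_of_one_le_left (by positivity) h1
      have h3 : q ^ d ≤ (α * L + 2 * δ) ^ d := by
        apply Real.rpow_le_rpow hq0 _ hd.le
        linarith
      gcongr
    have hqd0 : 0 ≤ q ^ d := Real.rpow_nonneg hq0 d
    have hq1 : q < 1 := by
      by_contra! h
      have := Real.one_le_rpow h hd.le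
      nlinarith
    choose t htc htA ht using hit
    set D := Metric.diam A with hD
    have hD0 : 0 ≤ D := Metric.diam_nonneg
    have hed : ∀ k, ∀ s : t k, Metric.ediam (s : Set X) ≤ ENNReal.ofReal (q ^ k * D) :=
      fun k s => Metric.ediam_le_of_forall_dist_le (ht k s s.2).2
    have hlim := Measure.hausdorffMeasure_le_liminf_sum (ι := fun k => t k) d A
      (l := Filter.atTop) (fun k : ℕ => ENNReal.ofReal (q ^ k * D))
      (by
        have := (tendsto_pow_atTop_nhds_zero_of_lt_one hq0 hq1).mul_const D
        simpa using ENNReal.tendsto_ofReal this)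
      (fun k s => (s : Set X)) (Filter.Eventually.of_forall hed) (Filter.Eventually.of_forall htA)
    have hsum : ∀ k, ∑ s : t k, Metric.ediam (s : Set X) ^ d ≤
        ENNReal.ofReal ((N * q ^ d) ^ k * D ^ d) := by
      intro k
      calc ∑ s : t k, Metric.ediam (s : Set X) ^ d
          ≤ ∑ s : t k, ENNReal.ofReal ((q ^ k * D) ^ d) := by
            refine Finset.sum_le_sum fun s _ => ?_
            rw [← ENNReal.ofReal_rpow_of_nonneg (by positivity) hd.le]
            exact ENNReal.rpow_le_rpow (hed k s) hd.le
        _ = ENNReal.ofReal ((t k).card * (q ^ k * D) ^ d) := by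
            rw [ENNReal.ofReal_mul (by positivity)]
            simp
        _ ≤ _ := by
            apply ENNReal.ofReal_le_ofReal
            have e : (q ^ k * D) ^ d = (q ^ d) ^ k * D ^ d := by
              rw [Real.mul_rpow (by positivity) hD0, ← Real.rpow_natCast, ← Real.rpow_natCast,
                ← Real.rpow_mul hq0, ← Real.rpow_mul hq0, mul_comm d]
            rw [e, mul_pow, mul_assoc]
            have := htc k
            gcongr
    have hto : Filter.Tendsto (fun k : ℕ => ENNReal.ofReal ((N * q ^ d) ^ k * D ^ d))
        Filter.atTop (nhds 0) := by
      have := (tendsto_pow_atTop_nhds_zero_of_lt_one (by positivity) hNq).mul_const (D ^ d)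
      simpa using ENNReal.tendsto_ofReal this
    have hto' := tendsto_of_tendsto_of_tendsto_of_le_of_le tendsto_const_nhds hto
      (fun k => zero_le) hsum
    rw [hto'.liminf_eq] at hlim
    exact le_antisymm hlim zero_le
  refine ⟨hmain, ?_⟩
  apply dimH_le_of_hausdorffMeasure_ne_top (d := d.toNNReal)
  rw [Real.coe_toNNReal d hd.le, hmain]
  simp
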